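/- For every morphism term g of the free bicartesian closed category ℬ there exists a mixless proof π of the sequent system 𝒥 such that g = t(π) holds in ℬ. -/

import Mathlib

namespace JSys

/-! ### The sequent system `𝒥` for intuitionistic propositional logic -/

/-- formulae, generated from a countable set of propositional letters by `⊤`, `⊥`,
`∧`, `∨`, `→` -/
inductive Fml : Type
  | pl : ℕ → Fml
  | top : Fml
  | bot : Fml
  | and : Fml → Fml → Fml
  | or : Fml → Fml → Fml
  | imp : Fml → Fml → Fml
deriving DecidableEq

/-- `∧`-contexts -/
inductive Ctx : Type
  | box : Ctx
  | conL : Ctx → Fml → Ctx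
  | conR : Fml → Ctx → Ctx
  | conB : Ctx → Ctx → Ctx

/-- substitution of a formula for every occurrence of `□` in a `∧`-context -/
def Ctx.fill : Ctx → Fml → Fml
  | .box, A => A
  | .conL G B, A => (G.fill A).and B
  | .conR B G, A => B.and (G.fill A)
  | .conB G H, A => (G.fill A).and (H.fill A)

/-- the number of occurrences of `□` in a `∧`-context; a `∧₁`-context is a
`∧`-context `F` with `F.boxes = 1` -/
def Ctx.boxes : Ctx → ℕ
  | .box => 1
  | .conL G _ => G.boxes
  | .conR _ G => G.boxes
  | .conB G H => G.boxes + H.boxes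

/-- substitution of a `∧`-context for every occurrence of `□` in a `∧`-context -/
def Ctx.subst : Ctx → Ctx → Ctx
  | .box, K => K
  | .conL G A, K => .conL (G.subst K) A
  | .conR A G, K => .conR A (G.subst K)
  | .conB G H, K => .conB (G.subst K) (H.subst K)

theorem Ctx.subst_fill (G K : Ctx) (X : Fml) :
    (G.subst K).fill X = G.fill (K.fill X) := by
  induction G <;> simp [Ctx.subst, Ctx.fill, *]

/-- Proofs of the sequent system `𝒥`.  A proof of the sequent `A ⊢ B` is a term of
type `JPf A B`.  The axioms are `a_A : A ⊢ A` and `Π_A : ⊥ ⊢ A`; the structural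
rules (for `∧₁`-contexts `F`, witnessed by `F.boxes = 1`) are the two associativity
rules, commutativity `γ`, contraction `ω`, thinning `θ`, the unit rules `τ`, `τⁱ`,
and mix (for an arbitrary `∧`-context `G`); the rules for the connectives are `(∧)`,
`(◇)`, the two right `∨`-introductions, `(∗)` and `(▷)`. -/
inductive JPf : Fml → Fml → Type
  | ax (A : Fml) : JPf A A
  | exf (A : Fml) : JPf .bot A
  /-- `(β^→_F)`: from `F((A∧B)∧C) ⊢ D` infer `F(A∧(B∧C)) ⊢ D` -/
  | bA (F : Ctx) (hF : F.boxes = 1) {A B C D : Fml} :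
      JPf (F.fill ((A.and B).and C)) D → JPf (F.fill (A.and (B.and C))) D
  /-- `(β^←_F)`: from `F(A∧(B∧C)) ⊢ D` infer `F((A∧B)∧C) ⊢ D` -/
  | bB (F : Ctx) (hF : F.boxes = 1) {A B C D : Fml} :
      JPf (F.fill (A.and (B.and C))) D → JPf (F.fill ((A.and B).and C)) D
  /-- `(γ_F)` -/
  | perm (F : Ctx) (hF : F.boxes = 1) {A B C : Fml} :
      JPf (F.fill (A.and B)) C → JPf (F.fill (B.and A)) C
  /-- `(ω_F)` -/
  | contr (F : Ctx) (hF : F.boxes = 1) {A B : Fml} :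
      JPf (F.fill (A.and A)) B → JPf (F.fill A) B
  /-- `(θ^A_F)` -/
  | thin (F : Ctx) (hF : F.boxes = 1) (A : Fml) {B : Fml} :
      JPf (F.fill .top) B → JPf (F.fill A) B
  /-- `(τ_F)` -/
  | unitI (F : Ctx) (hF : F.boxes = 1) {A B : Fml} :
      JPf (F.fill A) B → JPf (F.fill (A.and .top)) B
  /-- `(τⁱ_F)` -/
  | unitE (F : Ctx) (hF : F.boxes = 1) {A B : Fml} :
      JPf (F.fill (A.and .top)) B → JPf (F.fill A) B
  /-- mix -/
  | mix (G : Ctx) {A B C : Fml} : JPf A B → JPf (G.fill B) C → JPf (G.fill A) C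
  /-- `(∧)` -/
  | andI {A B C D : Fml} : JPf A C → JPf B D → JPf (A.and B) (C.and D)
  /-- `(◇)` -/
  | orE {A B C D : Fml} : JPf (A.and C) D → JPf (B.and C) D → JPf ((A.or B).and C) D
  /-- `(∨ r₁)` -/
  | orI1 {A B : Fml} (C : Fml) : JPf A B → JPf A (B.or C)
  /-- `(∨ r₂)` -/
  | orI2 {A C : Fml} (B : Fml) : JPf A C → JPf A (B.or C)
  /-- `(∗)` -/
  | star {A B C : Fml} : JPf (A.and B) C → JPf B (A.imp C)
  /-- `(▷)` -/
  | tri {A B C D E : Fml} : JPf A B → JPf (C.and D) E → JPf ((A.and (B.imp C)).and D) E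

/-- a proof is mixless iff it contains no application of the rule mix -/
def MixFree : ∀ {A B : Fml}, JPf A B → Prop
  | _, _, .ax _ => True
  | _, _, .exf _ => True
  | _, _, .bA _ _ π => MixFree π
  | _, _, .bB _ _ π => MixFree π
  | _, _, .perm _ _ π => MixFree π
  | _, _, .contr _ _ π => MixFree π
  | _, _, .thin _ _ _ π => MixFree π
  | _, _, .unitI _ _ π => MixFree π
  | _, _, .unitE _ _ π => MixFree π
  | _, _, .mix _ _ _ => False
  | _, _, .andI π₁ π₂ => MixFree π₁ ∧ MixFree π₂
  | _, _, .orE π₁ π₂ => MixFree π₁ ∧ MixFree π₂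
  | _, _, .orI1 _ π => MixFree π
  | _, _, .orI2 _ π => MixFree π
  | _, _, .star π => MixFree π
  | _, _, .tri π₁ π₂ => MixFree π₁ ∧ MixFree π₂

/-! ### The free bicartesian closed category `ℬ` -/

/-- objects of the free bicartesian closed category, generated from the
propositional letters -/
inductive Obj : Type
  | pl : ℕ → Obj
  | unit : Obj
  | zero : Obj
  | prod : Obj → Obj → Obj
  | coprod : Obj → Obj → Obj
  | exp : Obj → Obj → Obj
deriving DecidableEq

/-- Morphism terms of the free bicartesian closed category, generated from the
special morphisms by the operations `×`, `+`, `⇒` and `∘` (the latter written in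
diagrammatic order as `comp`).  Here `d = d_A : A×I → A`, `dInv = dⁱ_A`,
`assocR = b^→`, `assocL = b^←`, `braid = c`, `diag = w`, `bang = k`, `codiag = m`,
`exf = λ`, `inl = λ¹`, `inr = λ²`, `ev = ε`, `coev = η`. -/
inductive Mor : Obj → Obj → Type
  | id (A : Obj) : Mor A A
  | comp {A B C : Obj} : Mor A B → Mor B C → Mor A C
  | d (A : Obj) : Mor (A.prod .unit) A
  | dInv (A : Obj) : Mor A (A.prod .unit)
  | assocR (A B C : Obj) : Mor (A.prod (B.prod C)) ((A.prod B).prod C)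
  | assocL (A B C : Obj) : Mor ((A.prod B).prod C) (A.prod (B.prod C))
  | braid (A B : Obj) : Mor (A.prod B) (B.prod A)
  | diag (A : Obj) : Mor A (A.prod A)
  | bang (A : Obj) : Mor A .unit
  | codiag (A : Obj) : Mor (A.coprod A) A
  | exf (A : Obj) : Mor .zero A
  | inl (A B : Obj) : Mor A (A.coprod B)
  | inr (A B : Obj) : Mor B (A.coprod B)
  | ev (A B : Obj) : Mor (A.prod (A.exp B)) B
  | coev (A B : Obj) : Mor B (A.exp (A.prod B))
  | pr {A B C D : Obj} : Mor A B → Mor C D → Mor (A.prod C) (B.prod D)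
  | co {A B C D : Obj} : Mor A B → Mor C D → Mor (A.coprod C) (B.coprod D)
  | ex {A B C D : Obj} : Mor A B → Mor C D → Mor (B.exp C) (A.exp D)

namespace Mor

/-- the middle part of the canonical transformation `c^m` -/
def cmMid (B C D : Obj) : Mor (B.prod (C.prod D)) (C.prod (B.prod D)) :=
  .comp (.assocR B C D) (.comp (.pr (.braid B C) (.id D)) (.assocL C B D))

/-- the canonical transformation
`c^m_{A,B,C,D} = b^→_{A,C,B×D} ∘ (1_A × (b^←_{C,B,D} ∘ (c_{B,C} × 1_D) ∘ b^→_{B,C,D})) ∘ b^←_{A,B,C×D}` -/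
def cm (A B C D : Obj) : Mor ((A.prod B).prod (C.prod D)) ((A.prod C).prod (B.prod D)) :=
  .comp (.assocL A B (C.prod D)) (.comp (.pr (.id A) (cmMid B C D)) (.assocR A C (B.prod D)))

end Mor

/-- The bicartesian closed equations between morphism terms: the congruence
generated by the equations of Section 1 of the paper. -/
inductive BEq : ∀ {A B : Obj}, Mor A B → Mor A B → Prop
  | refl {A B} (f : Mor A B) : BEq f f
  | symm {A B} {f g : Mor A B} : BEq f g → BEq g f
  | trans {A B} {f g h : Mor A B} : BEq f g → BEq g h → BEq f h
  | comp_congr {A B C} {f f' : Mor A B} {g g' : Mor B C} :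
      BEq f f' → BEq g g' → BEq (.comp f g) (.comp f' g')
  | pr_congr {A B C D} {f f' : Mor A B} {g g' : Mor C D} :
      BEq f f' → BEq g g' → BEq (.pr f g) (.pr f' g')
  | co_congr {A B C D} {f f' : Mor A B} {g g' : Mor C D} :
      BEq f f' → BEq g g' → BEq (.co f g) (.co f' g')
  | ex_congr {A B C D} {f f' : Mor A B} {g g' : Mor C D} :
      BEq f f' → BEq g g' → BEq (.ex f g) (.ex f' g')
  -- (cat 1), (cat 2)
  | id_left {A B} (f : Mor A B) : BEq (.comp (.id A) f) f
  | id_right {A B} (f : Mor A B) : BEq (.comp f (.id B)) f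
  | assoc {A B C D} (f : Mor A B) (g : Mor B C) (h : Mor C D) :
      BEq (.comp (.comp f g) h) (.comp f (.comp g h))
  -- (× 1), (× 2)
  | prod_id (A B : Obj) : BEq (.pr (.id A) (.id B)) (.id (A.prod B))
  | prod_comp {A B C A' B' C'} (f₁ : Mor A B) (f₂ : Mor B C) (g₁ : Mor A' B') (g₂ : Mor B' C') :
      BEq (.pr (.comp f₁ f₂) (.comp g₁ g₂)) (.comp (.pr f₁ g₁) (.pr f₂ g₂))
  -- (d)
  | d_nat {A B} (f : Mor A B) :
      BEq (.comp (.d A) f) (.comp (.pr f (.id .unit)) (.d B))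
  -- (d dⁱ)
  | d_dInv (A : Obj) : BEq (.comp (.dInv A) (.d A)) (.id A)
  | dInv_d (A : Obj) : BEq (.comp (.d A) (.dInv A)) (.id (A.prod .unit))
  -- (d c)
  | d_braid : BEq (.comp (.braid .unit .unit) (.d .unit)) (.d .unit)
  -- (b)
  | b_nat {A B C D E F'} (f : Mor A D) (g : Mor B E) (h : Mor C F') :
      BEq (.comp (.assocR A B C) (.pr (.pr f g) h))
          (.comp (.pr f (.pr g h)) (.assocR D E F'))
  -- (b b)
  | bR_bL (A B C : Obj) :
      BEq (.comp (.assocL A B C) (.assocR A B C)) (.id ((A.prod B).prod C))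
  | bL_bR (A B C : Obj) :
      BEq (.comp (.assocR A B C) (.assocL A B C)) (.id (A.prod (B.prod C)))
  -- (b 5)
  | b5 (A B C D : Obj) :
      BEq (.comp (.assocR A B (C.prod D)) (.assocR (A.prod B) C D))
          (.comp (.pr (.id A) (.assocR B C D))
            (.comp (.assocR A (B.prod C) D) (.pr (.assocR A B C) (.id D))))
  -- (c)
  | c_nat {A B C D} (f : Mor A C) (g : Mor B D) :
      BEq (.comp (.braid A B) (.pr g f)) (.comp (.pr f g) (.braid C D))
  -- (c c)
  | c_c (A B : Obj) : BEq (.comp (.braid A B) (.braid B A)) (.id (A.prod B))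
  -- (b c d)
  | bcd (A B : Obj) :
      BEq (.comp (.assocR A .unit B) (.pr (.d A) (.id B)))
          (.pr (.id A) (.comp (.braid .unit B) (.d B)))
  -- (b c 6)
  | bc6 (A B C : Obj) :
      BEq (.comp (.assocR A B C) (.comp (.braid (A.prod B) C) (.assocR C A B)))
          (.comp (.pr (.id A) (.braid B C))
            (.comp (.assocR A C B) (.pr (.braid A C) (.id B))))
  -- (w)
  | w_nat {A B} (f : Mor A B) :
      BEq (.comp (.diag A) (.pr f f)) (.comp f (.diag B))
  -- (d w)
  | d_w : BEq (.comp (.diag .unit) (.d .unit)) (.id .unit)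
  -- (b w)
  | b_w (A : Obj) :
      BEq (.comp (.diag A) (.comp (.pr (.id A) (.diag A)) (.assocR A A A)))
          (.comp (.diag A) (.pr (.diag A) (.id A)))
  -- (c w)
  | c_w (A : Obj) : BEq (.comp (.diag A) (.braid A A)) (.diag A)
  -- (b c w 8)
  | bcw8 (A B : Obj) :
      BEq (.comp (.diag (A.prod B)) (Mor.cm A B A B)) (.pr (.diag A) (.diag B))
  -- (k)
  | k_unique {A} (f : Mor A .unit) : BEq f (.bang A)
  -- (d k w)
  | dkw (A : Obj) :
      BEq (.comp (.diag A) (.comp (.pr (.id A) (.bang A)) (.d A))) (.id A)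
  -- (+ 1), (+ 2)
  | coprod_id (A B : Obj) : BEq (.co (.id A) (.id B)) (.id (A.coprod B))
  | coprod_comp {A B C A' B' C'} (f₁ : Mor A B) (f₂ : Mor B C) (g₁ : Mor A' B') (g₂ : Mor B' C') :
      BEq (.co (.comp f₁ f₂) (.comp g₁ g₂)) (.comp (.co f₁ g₁) (.co f₂ g₂))
  -- (λ¹), (λ²)
  | inl_nat {A₁ A₂ B₁ B₂} (f₁ : Mor A₁ B₁) (f₂ : Mor A₂ B₂) :
      BEq (.comp (.inl A₁ A₂) (.co f₁ f₂)) (.comp f₁ (.inl B₁ B₂))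
  | inr_nat {A₁ A₂ B₁ B₂} (f₁ : Mor A₁ B₁) (f₂ : Mor A₂ B₂) :
      BEq (.comp (.inr A₁ A₂) (.co f₁ f₂)) (.comp f₂ (.inr B₁ B₂))
  -- (λ)
  | exf_unique {A} (f : Mor .zero A) : BEq f (.exf A)
  -- (m)
  | m_nat {A B} (f : Mor A B) :
      BEq (.comp (.codiag A) f) (.comp (.co f f) (.codiag B))
  -- (λ m 1)
  | m_inl (A : Obj) : BEq (.comp (.inl A A) (.codiag A)) (.id A)
  | m_inr (A : Obj) : BEq (.comp (.inr A A) (.codiag A)) (.id A)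
  -- (λ m 2)
  | m_inl_inr (A B : Obj) :
      BEq (.comp (.co (.inl A B) (.inr A B)) (.codiag (A.coprod B))) (.id (A.coprod B))
  -- (⇒ 1), (⇒ 2)
  | exp_id (A B : Obj) : BEq (.ex (.id A) (.id B)) (.id (A.exp B))
  | exp_comp {A B' B C D' D} (g₁ : Mor B' B) (g₂ : Mor A B') (f₁ : Mor D' D) (f₂ : Mor C D') :
      BEq (.ex (.comp g₂ g₁) (.comp f₂ f₁)) (.comp (.ex g₁ f₂) (.ex g₂ f₁))
  -- (ε 1)
  | eps1 {A B C} (f : Mor A B) :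
      BEq (.comp (.ev C A) f) (.comp (.pr (.id C) (.ex (.id C) f)) (.ev C B))
  -- (η 1)
  | eta1 {A B C} (f : Mor A B) :
      BEq (.comp (.coev C A) (.ex (.id C) (.pr (.id C) f))) (.comp f (.coev C B))
  -- (ε 2)
  | eps2 {A B C} (f : Mor A B) :
      BEq (.comp (.pr f (.ex (.id B) (.id C))) (.ev B C))
          (.comp (.pr (.id A) (.ex f (.id C))) (.ev A C))
  -- (η 2)
  | eta2 {A B C} (f : Mor A B) :
      BEq (.comp (.coev B C) (.ex f (.pr (.id B) (.id C))))
          (.comp (.coev A C) (.ex (.id A) (.pr f (.id C))))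
  -- (1 ε η)
  | triangle1 (A B : Obj) :
      BEq (.comp (.coev A (A.exp B)) (.ex (.id A) (.ev A B))) (.id (A.exp B))
  -- (ε 1 η)
  | triangle2 (A B : Obj) :
      BEq (.comp (.pr (.id A) (.coev A B)) (.ev A (A.prod B))) (.id (A.prod B))

/-! ### The translations `t` and `t′` -/

/-- the translation of formulae into objects of `ℬ` -/
def tF : Fml → Obj
  | .pl i => .pl i
  | .top => .unit
  | .bot => .zero
  | .and A B => (tF A).prod (tF B)
  | .or A B => (tF A).coprod (tF B)
  | .imp A B => (tF A).exp (tF B)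

/-- the functor (acting on morphism terms) extracted from a `∧`-context -/
def mapCtx : (F : Ctx) → {X Y : Fml} → Mor (tF X) (tF Y) →
    Mor (tF (F.fill X)) (tF (F.fill Y))
  | .box, _, _, g => g
  | .conL G A, _, _, g => .pr (mapCtx G g) (.id (tF A))
  | .conR A G, _, _, g => .pr (.id (tF A)) (mapCtx G g)
  | .conB G H, _, _, g => .pr (mapCtx G g) (mapCtx H g)

/-- the canonical distributivity morphism
`ξ_{X,Y,Z} = ε ∘ (1_X × (m ∘ ((1_X ⇒ λ¹) ∘ η + (1_X ⇒ λ²) ∘ η))) : X×(Y+Z) → (X×Y)+(X×Z)` -/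
def xiM (X Y Z : Obj) : Mor (X.prod (Y.coprod Z)) ((X.prod Y).coprod (X.prod Z)) :=
  .comp
    (.pr (.id X)
      (.comp
        (.co (.comp (.coev X Y) (.ex (.id X) (.inl (X.prod Y) (X.prod Z))))
             (.comp (.coev X Z) (.ex (.id X) (.inr (X.prod Y) (X.prod Z)))))
        (.codiag (X.exp ((X.prod Y).coprod (X.prod Z))))))
    (.ev X ((X.prod Y).coprod (X.prod Z)))

/-- the translation `t` of `𝒥`-proofs into morphism terms of `ℬ` -/
def tP : ∀ {A B : Fml}, JPf A B → Mor (tF A) (tF B)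
  | _, _, .ax A => .id (tF A)
  | _, _, .exf A => .exf (tF A)
  | _, _, .bA F _ (A := A) (B := B) (C := C) π =>
      .comp (mapCtx F (X := A.and (B.and C)) (Y := (A.and B).and C)
        (.assocR (tF A) (tF B) (tF C))) (tP π)
  | _, _, .bB F _ (A := A) (B := B) (C := C) π =>
      .comp (mapCtx F (X := (A.and B).and C) (Y := A.and (B.and C))
        (.assocL (tF A) (tF B) (tF C))) (tP π)
  | _, _, .perm F _ (A := A) (B := B) π =>
      .comp (mapCtx F (X := B.and A) (Y := A.and B) (.braid (tF B) (tF A))) (tP π)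
  | _, _, .contr F _ (A := A) π =>
      .comp (mapCtx F (X := A) (Y := A.and A) (.diag (tF A))) (tP π)
  | _, _, .thin F _ A π => .comp (mapCtx F (X := A) (Y := Fml.top) (.bang (tF A))) (tP π)
  | _, _, .unitI F _ (A := A) π => .comp (mapCtx F (X := A.and Fml.top) (Y := A) (.d (tF A))) (tP π)
  | _, _, .unitE F _ (A := A) π => .comp (mapCtx F (X := A) (Y := A.and Fml.top) (.dInv (tF A))) (tP π)
  | _, _, .mix G π₁ π₂ => .comp (mapCtx G (tP π₁)) (tP π₂)
  | _, _, .andI π₁ π₂ => .pr (tP π₁) (tP π₂)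
  | _, _, .orE (A := A) (B := B) (C := C) (D := D) π₁ π₂ =>
      .comp (.braid ((tF A).coprod (tF B)) (tF C))
        (.comp (xiM (tF C) (tF A) (tF B))
          (.comp (.co (.braid (tF C) (tF A)) (.braid (tF C) (tF B)))
            (.comp (.co (tP π₁) (tP π₂)) (.codiag (tF D)))))
  | _, _, .orI1 C π => .comp (tP π) (.inl _ (tF C))
  | _, _, .orI2 B π => .comp (tP π) (.inr (tF B) _)
  | _, _, .star π => .comp (.coev _ _) (.ex (.id _) (tP π))
  | _, _, .tri (B := Bf) (C := Cf) π₁ π₂ =>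
      .comp (.pr (.comp (.pr (tP π₁) (.id ((tF Bf).exp (tF Cf)))) (.ev (tF Bf) (tF Cf))) (.id _))
        (tP π₂)

/-- the translation of objects of `ℬ` back into formulae (inverse to `tF`) -/
def uF : Obj → Fml
  | .pl i => .pl i
  | .unit => .top
  | .zero => .bot
  | .prod A B => (uF A).and (uF B)
  | .coprod A B => (uF A).or (uF B)
  | .exp A B => (uF A).imp (uF B)

theorem tF_uF (X : Obj) : tF (uF X) = X := by
  induction X <;> simp [tF, uF, *]

/-- the translation `t′` of morphism terms of `ℬ` into `𝒥`-proofs -/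
def uP : ∀ {X Y : Obj}, Mor X Y → JPf (uF X) (uF Y)
  | _, _, .id A => .ax (uF A)
  | _, _, .comp f g => .mix .box (uP f) (uP g)
  | _, _, .d A => .unitI .box rfl (.ax (uF A))
  | _, _, .dInv A => .unitE .box rfl (.ax ((uF A).and .top))
  | _, _, .assocR A B C => .bA .box rfl (.ax (((uF A).and (uF B)).and (uF C)))
  | _, _, .assocL A B C => .bB .box rfl (.ax ((uF A).and ((uF B).and (uF C))))
  | _, _, .braid A B => .perm .box rfl (.ax ((uF B).and (uF A)))
  | _, _, .diag A => .contr .box rfl (.ax ((uF A).and (uF A)))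
  | _, _, .bang A => .thin .box rfl (uF A) (.ax .top)
  | _, _, .codiag A => .unitE .box rfl
      (.orE (.unitI .box rfl (.ax (uF A))) (.unitI .box rfl (.ax (uF A))))
  | _, _, .exf A => .exf (uF A)
  | _, _, .inl A B => .orI1 (uF B) (.ax (uF A))
  | _, _, .inr A B => .orI2 (uF A) (.ax (uF B))
  | _, _, .ev A B => .unitE .box rfl (.tri (.ax (uF A)) (.unitI .box rfl (.ax (uF B))))
  | _, _, .coev A B => .star (.ax ((uF A).and (uF B)))
  | _, _, .pr f g => .andI (uP f) (uP g)
  | _, _, .co (A := A) (B := Bo) (C := C) (D := D) f g => .unitE .box rfl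
      (.orE (.unitI .box rfl (.orI1 (uF D) (uP f)))
            (.unitI .box rfl (.orI2 (uF Bo) (uP g))))
  | _, _, .ex f g => .star (.unitE .box rfl (.tri (uP f) (.unitI .box rfl (uP g))))

/-!
The equations of `BEq` make the morphism terms into a bicartesian closed category `ℬ`; that its
products are genuine ones is Fox's theorem for the natural diagonal `w`. Eliminating mix is then a
normalisation by logical predicates. By recursion on `X`, single out the *reducible* morphisms
`tF Γ ⟶ X`, closed under the left rules of `𝒥` as in a Beth model. By simultaneous induction on a
formula `A`, every reducible morphism to `tF A` is denoted by a mixless proof and the identity of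
`tF A` is reducible; by induction on morphism terms, every morphism of `ℬ` preserves reducibility.
Hence `g = g ∘ 1` is reducible, and so is denoted by a mixless proof.
-/

open CategoryTheory MonoidalCategory CartesianMonoidalCategory Limits

section Fox

variable {C : Type*} [Category* C] [SemiCartesianMonoidalCategory C]

lemma tensorHom_comp_fst {X Y X' Y' : C} (f : X ⟶ X') (g : Y ⟶ Y') :
    (f ⊗ₘ g) ≫ fst X' Y' = fst X Y ≫ f := by
  rw [fst_def, fst_def, tensorHom_def_assoc, ← whiskerLeft_comp_assoc,
    isTerminalTensorUnit.hom_ext (g ≫ isTerminalTensorUnit.from Y') (isTerminalTensorUnit.from Y),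
    ← whisker_exchange_assoc, rightUnitor_naturality, Category.assoc]

lemma tensorHom_comp_snd {X Y X' Y' : C} (f : X ⟶ X') (g : Y ⟶ Y') :
    (f ⊗ₘ g) ≫ snd X' Y' = snd X Y ≫ g := by
  rw [snd_def, snd_def, tensorHom_def'_assoc, ← comp_whiskerRight_assoc,
    isTerminalTensorUnit.hom_ext (f ≫ isTerminalTensorUnit.from X') (isTerminalTensorUnit.from X),
    whisker_exchange_assoc, leftUnitor_naturality, Category.assoc]

variable [BraidedCategory C]

lemma tensorμ_comp_fst_tensorHom_snd (A B : C) :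
    tensorμ A B A B ≫ (fst A A ⊗ₘ snd B B) = fst A B ⊗ₘ snd A B := by
  have tensorμ_unit : tensorμ A (𝟙_ C) (𝟙_ C) B ≫ ((ρ_ A).hom ⊗ₘ (λ_ B).hom) =
      (ρ_ A).hom ⊗ₘ (λ_ B).hom := by
    have : (β_ (𝟙_ C) (𝟙_ C)).hom = 𝟙 _ := by
      rw [braiding_tensorUnit_left]; monoidal
    rw [tensorμ, this]
    monoidal
  have h := tensorμ_natural (𝟙 A) (isTerminalTensorUnit.from B) (isTerminalTensorUnit.from A) (𝟙 B)
  simp only [fst_def, snd_def, ← id_tensorHom, ← tensorHom_id]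
  rw [← tensorHom_comp_tensorHom, ← reassoc_of% h, tensorμ_unit, tensorHom_comp_tensorHom]

/-- Fox's characterisation of cartesian categories: in a braided monoidal category with terminal
unit, a natural and monoidal diagonal that splits both projections makes the tensor product a
binary product. -/
def isLimitOfNaturalDiagonal (Δ : ∀ X : C, X ⟶ X ⊗ X)
    (naturality : ∀ {X Y : C} (f : X ⟶ Y), Δ X ≫ (f ⊗ₘ f) = f ≫ Δ Y)
    (comp_fst : ∀ X, Δ X ≫ fst X X = 𝟙 X) (comp_snd : ∀ X, Δ X ≫ snd X X = 𝟙 X)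
    (comp_tensorμ : ∀ X Y, Δ (X ⊗ Y) ≫ tensorμ X Y X Y = Δ X ⊗ₘ Δ Y) (X Y : C) :
    IsLimit (BinaryFan.mk (fst X Y) (snd X Y)) :=
  have pair_projections : Δ (X ⊗ Y) ≫ (fst X Y ⊗ₘ snd X Y) = 𝟙 (X ⊗ Y) := by
    rw [← tensorμ_comp_fst_tensorHom_snd, reassoc_of% comp_tensorμ, tensorHom_comp_tensorHom,
      comp_fst, comp_snd, id_tensorHom_id]
  BinaryFan.IsLimit.mk _ (fun f g ↦ Δ _ ≫ (f ⊗ₘ g))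
    (fun f g ↦ by simp [tensorHom_comp_fst, reassoc_of% comp_fst])
    (fun f g ↦ by simp [tensorHom_comp_snd, reassoc_of% comp_snd])
    (fun f g m h₁ h₂ ↦ by
      subst h₁ h₂
      simp [← tensorHom_comp_tensorHom, reassoc_of% naturality, pair_projections])

end Fox

/-! ### The cartesian structure of `ℬ` -/

namespace Mor

instance setoid (A B : Obj) : Setoid (Mor A B) := ⟨BEq, .refl, .symm, .trans⟩

end Mor

/-- The free bicartesian closed category `ℬ`: its morphisms are the morphism terms modulo `BEq`. -/
instance : Category Obj where
  Hom A B := Quotient (Mor.setoid A B)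
  id A := ⟦.id A⟧
  comp := Quotient.map₂ .comp fun _ _ hf _ _ hg ↦ .comp_congr hf hg
  id_comp := Quotient.ind fun f ↦ Quotient.sound (.id_left f)
  comp_id := Quotient.ind fun f ↦ Quotient.sound (.id_right f)
  assoc := fun f g h ↦ Quotient.inductionOn₃ f g h fun f g h ↦ Quotient.sound (.assoc f g h)

/-- The morphism of `ℬ` denoted by a morphism term. -/
def Mor.hom {A B : Obj} (f : Mor A B) : A ⟶ B := Quotient.mk _ f

lemma Mor.hom_eq_iff {A B : Obj} {f g : Mor A B} : f.hom = g.hom ↔ BEq f g := Quotient.eq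

lemma BEq.hom_eq {A B : Obj} {f g : Mor A B} (h : BEq f g) : f.hom = g.hom := Quotient.sound h

lemma Mor.hom_surjective {A B : Obj} : Function.Surjective (Mor.hom : Mor A B → (A ⟶ B)) :=
  Quotient.mk_surjective

namespace Obj

/-- The unit law `d` of the product as an isomorphism. -/
def unitIso (A : Obj) : A.prod .unit ≅ A :=
  ⟨(Mor.d A).hom, (Mor.dInv A).hom, (BEq.dInv_d A).hom_eq, (BEq.d_dInv A).hom_eq⟩

/-- The symmetry `c` of the product as an isomorphism. -/
def braidIso (A B : Obj) : A.prod B ≅ B.prod A :=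
  ⟨(Mor.braid A B).hom, (Mor.braid B A).hom, (BEq.c_c A B).hom_eq, (BEq.c_c B A).hom_eq⟩

/-- The associativity `b` of the product as an isomorphism. -/
def assocIso (A B C : Obj) : (A.prod B).prod C ≅ A.prod (B.prod C) :=
  ⟨(Mor.assocL A B C).hom, (Mor.assocR A B C).hom, (BEq.bR_bL A B C).hom_eq,
    (BEq.bL_bR A B C).hom_eq⟩

end Obj

instance : MonoidalCategoryStruct Obj where
  tensorObj := .prod
  tensorUnit := .unit
  tensorHom := Quotient.map₂ .pr fun _ _ hf _ _ hg ↦ .pr_congr hf hg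
  whiskerLeft A _ _ := Quotient.map₂ .pr (fun _ _ hf _ _ hg ↦ .pr_congr hf hg) (𝟙 A)
  whiskerRight f B := Quotient.map₂ .pr (fun _ _ hf _ _ hg ↦ .pr_congr hf hg) f (𝟙 B)
  associator := Obj.assocIso
  rightUnitor := Obj.unitIso
  leftUnitor A := Obj.braidIso .unit A ≪≫ Obj.unitIso A

namespace Obj

lemma assocIso_naturality {A B C A' B' C' : Obj} (f : A ⟶ A') (g : B ⟶ B') (h : C ⟶ C') :
    (assocIso A B C).inv ≫ ((f ⊗ₘ g) ⊗ₘ h) = (f ⊗ₘ g ⊗ₘ h) ≫ (assocIso A' B' C').inv := by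
  obtain ⟨f, rfl⟩ := Mor.hom_surjective f
  obtain ⟨g, rfl⟩ := Mor.hom_surjective g
  obtain ⟨h, rfl⟩ := Mor.hom_surjective h
  exact (BEq.b_nat f g h).hom_eq

lemma unitIso_naturality {A B : Obj} (f : A ⟶ B) :
    (f ⊗ₘ 𝟙 (𝟙_ Obj)) ≫ (unitIso B).hom = (unitIso A).hom ≫ f := by
  obtain ⟨f, rfl⟩ := Mor.hom_surjective f
  exact (BEq.d_nat f).symm.hom_eq

lemma braidIso_naturality {A B A' B' : Obj} (f : A ⟶ A') (g : B ⟶ B') :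
    (f ⊗ₘ g) ≫ (braidIso A' B').hom = (braidIso A B).hom ≫ (g ⊗ₘ f) := by
  obtain ⟨f, rfl⟩ := Mor.hom_surjective f
  obtain ⟨g, rfl⟩ := Mor.hom_surjective g
  exact (BEq.c_nat f g).symm.hom_eq

lemma tensorHom_comp_tensorHom {A B A' B' A'' B'' : Obj} (f : A ⟶ A') (g : B ⟶ B')
    (f' : A' ⟶ A'') (g' : B' ⟶ B'') : (f ⊗ₘ g) ≫ (f' ⊗ₘ g') = (f ≫ f') ⊗ₘ (g ≫ g') := by
  obtain ⟨f, rfl⟩ := Mor.hom_surjective f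
  obtain ⟨g, rfl⟩ := Mor.hom_surjective g
  obtain ⟨f', rfl⟩ := Mor.hom_surjective f'
  obtain ⟨g', rfl⟩ := Mor.hom_surjective g'
  exact (BEq.prod_comp f f' g g').symm.hom_eq

lemma id_tensorHom_id (A B : Obj) : 𝟙 A ⊗ₘ 𝟙 B = 𝟙 (A ⊗ B) := (BEq.prod_id A B).hom_eq

/-- The product of two isomorphisms. -/
def prodIso {A B A' B' : Obj} (e : A ≅ A') (e' : B ≅ B') : A.prod B ≅ A'.prod B' where
  hom := e.hom ⊗ₘ e'.hom
  inv := e.inv ⊗ₘ e'.inv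
  hom_inv_id := by
    rw [tensorHom_comp_tensorHom, e.hom_inv_id, e'.hom_inv_id, id_tensorHom_id]; rfl
  inv_hom_id := by
    rw [tensorHom_comp_tensorHom, e.inv_hom_id, e'.inv_hom_id, id_tensorHom_id]; rfl

lemma assocIso_pentagon (A B C D : Obj) :
    prodIso (assocIso A B C) (.refl D) ≪≫ assocIso A (B.prod C) D ≪≫
        prodIso (.refl A) (assocIso B C D) =
      assocIso (A.prod B) C D ≪≫ assocIso A B (C.prod D) :=
  Iso.ext_inv ((Category.assoc _ _ _).trans (BEq.b5 A B C D).symm.hom_eq)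

end Obj

instance : MonoidalCategory Obj :=
  .ofTensorHom
    (id_tensorHom_id := Obj.id_tensorHom_id)
    (id_tensorHom := fun _ _ _ _ ↦ rfl)
    (tensorHom_id := fun _ _ ↦ rfl)
    (tensorHom_comp_tensorHom := Obj.tensorHom_comp_tensorHom)
    (associator_naturality := fun f g h ↦ by
      rw [← Iso.inv_comp_eq, ← Category.assoc, ← Iso.eq_comp_inv]
      exact Obj.assocIso_naturality f g h)
    (leftUnitor_naturality := fun {A B} f ↦ calc
      (𝟙 _ ⊗ₘ f) ≫ (Obj.braidIso .unit B).hom ≫ (Obj.unitIso B).hom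
        = (Obj.braidIso .unit A).hom ≫ (f ⊗ₘ 𝟙 _) ≫ (Obj.unitIso B).hom := by
          rw [← Category.assoc, Obj.braidIso_naturality, Category.assoc]
      _ = ((Obj.braidIso .unit A).hom ≫ (Obj.unitIso A).hom) ≫ f :=
          (congrArg _ (Obj.unitIso_naturality f)).trans (Category.assoc _ _ _).symm)
    (rightUnitor_naturality := Obj.unitIso_naturality)
    (pentagon := fun A B C D ↦ congrArg Iso.hom (Obj.assocIso_pentagon A B C D))
    (triangle := fun A B ↦ (Iso.inv_comp_eq _).mp (BEq.bcd A B).hom_eq |>.symm)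

lemma Obj.braidIso_hexagon (A B C : Obj) :
    (α_ A B C).inv ≫ (braidIso (A ⊗ B) C).hom ≫ (α_ C A B).inv =
      A ◁ (braidIso B C).hom ≫ (α_ A C B).inv ≫ (braidIso A C).hom ▷ B :=
  (BEq.bc6 A B C).hom_eq

instance : SymmetricCategory Obj where
  braiding := Obj.braidIso
  braiding_naturality_right A _ _ f := Obj.braidIso_naturality (𝟙 A) f
  braiding_naturality_left f B := Obj.braidIso_naturality f (𝟙 B)
  hexagon_forward A B C :=
    have hexagon_inv :
        (α_ A B C ≪≫ Obj.braidIso A (B ⊗ C) ≪≫ α_ B C A).inv =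
          (whiskerRightIso (Obj.braidIso A B) C ≪≫ α_ B A C ≪≫
            whiskerLeftIso B (Obj.braidIso A C)).inv :=
      (Category.assoc _ _ _).trans ((Obj.braidIso_hexagon B C A).trans (Category.assoc _ _ _).symm)
    congrArg Iso.hom (Iso.ext_inv hexagon_inv)
  hexagon_reverse := Obj.braidIso_hexagon
  symmetry A B := (Obj.braidIso A B).hom_inv_id

instance : SemiCartesianMonoidalCategory Obj where
  isTerminalTensorUnit := IsTerminal.ofUniqueHom (fun A ↦ (Mor.bang A).hom) fun A f ↦ by
    obtain ⟨f, rfl⟩ := Mor.hom_surjective f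
    exact (BEq.k_unique f).hom_eq
  fst A B := A ◁ (Mor.bang B).hom ≫ (ρ_ A).hom
  snd A B := (Mor.bang A).hom ▷ B ≫ (λ_ B).hom

namespace Mor

lemma diag_comp_fst (A : Obj) : (diag A).hom ≫ fst A A = 𝟙 A := (BEq.dkw A).hom_eq

lemma diag_comp_snd (A : Obj) : (diag A).hom ≫ snd A A = 𝟙 A := calc
  (diag A).hom ≫ snd A A = (diag A).hom ≫ (β_ A A).hom ≫ fst A A := by
    rw [fst_def, snd_def, ← BraidedCategory.braiding_naturality_left_assoc, braiding_rightUnitor]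
  _ = (diag A).hom ≫ fst A A :=
    (Category.assoc _ _ _).symm.trans (congrArg (· ≫ fst A A) (BEq.c_w A).hom_eq)
  _ = 𝟙 A := diag_comp_fst A

lemma diag_naturality {A B : Obj} (f : A ⟶ B) :
    (diag A).hom ≫ (f ⊗ₘ f) = f ≫ (diag B).hom := by
  obtain ⟨f, rfl⟩ := hom_surjective f
  exact (BEq.w_nat f).hom_eq

lemma hom_cm (A B C D : Obj) : (cm A B C D).hom = tensorμ A B C D := calc
  (cm A B C D).hom =
      (α_ A B (C ⊗ D)).hom ≫
        A ◁ ((α_ B C D).inv ≫ (β_ B C).hom ▷ D ≫ (α_ C B D).hom) ≫ (α_ A C (B ⊗ D)).inv := rfl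
  _ = tensorμ A B C D := by simp [tensorμ]

end Mor

instance : CartesianMonoidalCategory Obj where
  tensorProductIsBinaryProduct :=
    isLimitOfNaturalDiagonal (fun A ↦ (Mor.diag A).hom) Mor.diag_naturality Mor.diag_comp_fst
      Mor.diag_comp_snd fun A B ↦
        (congrArg _ (Mor.hom_cm A B A B)).symm.trans (BEq.bcw8 A B).hom_eq

/-! ### Exponentials and coproducts in `ℬ` -/

namespace Obj

/-- The functor `A ⇒ _` on `ℬ`. -/
def expFunctor (A : Obj) : Obj ⥤ Obj where
  obj := A.exp
  map := Quotient.map (.ex (.id A)) fun _ _ h ↦ .ex_congr (.refl _) h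
  map_id B := (BEq.exp_id A B).hom_eq
  map_comp f g := by
    obtain ⟨f, rfl⟩ := Mor.hom_surjective f
    obtain ⟨g, rfl⟩ := Mor.hom_surjective g
    exact (BEq.ex_congr (.symm (.id_left _)) (.refl _)).hom_eq.trans
      (BEq.exp_comp (.id A) (.id A) g f).hom_eq

/-- The adjunction `A × _ ⊣ A ⇒ _` given by `η` and `ε`. -/
def expAdjunction (A : Obj) : tensorLeft A ⊣ expFunctor A where
  unit :=
    { app B := (Mor.coev A B).hom
      naturality _ _ f := by
        obtain ⟨f, rfl⟩ := Mor.hom_surjective f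
        exact (BEq.eta1 f).symm.hom_eq }
  counit :=
    { app B := (Mor.ev A B).hom
      naturality _ _ f := by
        obtain ⟨f, rfl⟩ := Mor.hom_surjective f
        exact (BEq.eps1 f).symm.hom_eq }
  left_triangle_components B := (BEq.triangle2 A B).hom_eq
  right_triangle_components B := (BEq.triangle1 A B).hom_eq

instance : MonoidalClosed Obj where
  closed A := ⟨expFunctor A, expAdjunction A⟩

/-- The functorial action of `+` on the morphisms of `ℬ`. -/
def coprodMap {A B C D : Obj} : (A ⟶ B) → (C ⟶ D) → (A.coprod C ⟶ B.coprod D) :=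
  Quotient.map₂ .co fun _ _ hf _ _ hg ↦ .co_congr hf hg

lemma inl_comp_coprodMap {A B C D : Obj} (f : A ⟶ B) (g : C ⟶ D) :
    (Mor.inl A C).hom ≫ coprodMap f g = f ≫ (Mor.inl B D).hom := by
  obtain ⟨f, rfl⟩ := Mor.hom_surjective f
  obtain ⟨g, rfl⟩ := Mor.hom_surjective g
  exact (BEq.inl_nat f g).hom_eq

lemma inr_comp_coprodMap {A B C D : Obj} (f : A ⟶ B) (g : C ⟶ D) :
    (Mor.inr A C).hom ≫ coprodMap f g = g ≫ (Mor.inr B D).hom := by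
  obtain ⟨f, rfl⟩ := Mor.hom_surjective f
  obtain ⟨g, rfl⟩ := Mor.hom_surjective g
  exact (BEq.inr_nat f g).hom_eq

lemma inl_comp_codiag (A : Obj) : (Mor.inl A A).hom ≫ (Mor.codiag A).hom = 𝟙 A :=
  (BEq.m_inl A).hom_eq

lemma inr_comp_codiag (A : Obj) : (Mor.inr A A).hom ≫ (Mor.codiag A).hom = 𝟙 A :=
  (BEq.m_inr A).hom_eq

lemma inl_comp_coprodMap_comp_codiag {A B C : Obj} (f : A ⟶ C) (g : B ⟶ C) :
    (Mor.inl A B).hom ≫ coprodMap f g ≫ (Mor.codiag C).hom = f := by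
  rw [reassoc_of% inl_comp_coprodMap, inl_comp_codiag, Category.comp_id]

lemma inr_comp_coprodMap_comp_codiag {A B C : Obj} (f : A ⟶ C) (g : B ⟶ C) :
    (Mor.inr A B).hom ≫ coprodMap f g ≫ (Mor.codiag C).hom = g := by
  rw [reassoc_of% inr_comp_coprodMap, inr_comp_codiag, Category.comp_id]

lemma coprodMap_comp_codiag {A B C : Obj} (m : A.coprod B ⟶ C) :
    coprodMap ((Mor.inl A B).hom ≫ m) ((Mor.inr A B).hom ≫ m) ≫ (Mor.codiag C).hom = m := by
  obtain ⟨m, rfl⟩ := Mor.hom_surjective m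
  calc
    _ = (coprodMap (Mor.inl A B).hom (Mor.inr A B).hom ≫ coprodMap m.hom m.hom) ≫
          (Mor.codiag C).hom :=
      congrArg (· ≫ (Mor.codiag C).hom) (BEq.coprod_comp _ m _ m).hom_eq
    _ = coprodMap (Mor.inl A B).hom (Mor.inr A B).hom ≫ (Mor.codiag _).hom ≫ m.hom :=
      (Category.assoc _ _ _).trans (congrArg _ (BEq.m_nat m).symm.hom_eq)
    _ = (coprodMap (Mor.inl A B).hom (Mor.inr A B).hom ≫ (Mor.codiag _).hom) ≫ m.hom :=
      (Category.assoc _ _ _).symm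
    _ = 𝟙 _ ≫ m.hom := congrArg (· ≫ m.hom) (BEq.m_inl_inr A B).hom_eq
    _ = m.hom := Category.id_comp _

/-- The universal property of `A + B`, from `m`, `λ¹` and `λ²`. -/
def isColimitCoprod (A B : Obj) :
    IsColimit (BinaryCofan.mk (Mor.inl A B).hom (Mor.inr A B).hom) :=
  BinaryCofan.IsColimit.mk _ (fun f g ↦ coprodMap f g ≫ (Mor.codiag _).hom)
    inl_comp_coprodMap_comp_codiag inr_comp_coprodMap_comp_codiag
    (fun f g m h₁ h₂ ↦ by
      subst h₁ h₂
      exact (coprodMap_comp_codiag m).symm)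

/-- The universal property of `O`, from `λ`. -/
def isInitialZero : IsInitial Obj.zero :=
  IsInitial.ofUniqueHom (fun A ↦ (Mor.exf A).hom) fun _ f ↦ by
    obtain ⟨f, rfl⟩ := Mor.hom_surjective f
    exact (BEq.exf_unique f).hom_eq

end Obj

namespace Mor

variable {A B C D : Obj}

lemma hom_diag (A : Obj) : (diag A).hom = lift (𝟙 A) (𝟙 A) := by
  rw [← lift_comp_fst_snd (diag A).hom, diag_comp_fst, diag_comp_snd]

lemma hom_id_ex (A : Obj) (f : Mor B C) : (ex (.id A) f).hom = (ihom A).map f.hom := rfl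

lemma hom_ex_id (f : Mor A B) (C : Obj) :
    (ex f (.id C)).hom = MonoidalClosed.curry (f.hom ▷ (ihom B).obj C ≫ (ihom.ev B).app C) := by
  have dinaturality : f.hom ▷ (ihom B).obj C ≫ (ihom.ev B).app C =
      A ◁ (ex f (.id C)).hom ≫ (ihom.ev A).app C :=
    ((BEq.comp_congr (.pr_congr (.refl f) (.symm (.exp_id B C))) (.refl _)).trans
      (.eps2 f)).hom_eq
  exact dinaturality ▸ (MonoidalClosed.curry_uncurry (ex f (.id C)).hom).symm

lemma hom_ex (f : Mor A B) (g : Mor C D) : (ex f g).hom =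
    MonoidalClosed.curry ((f.hom ▷ (ihom B).obj C ≫ (ihom.ev B).app C) ≫ g.hom) := by
  rw [MonoidalClosed.curry_natural_right, ← hom_ex_id, ← hom_id_ex]
  exact ((BEq.ex_congr (.symm (.id_left f)) (.symm (.id_left g))).trans
    (.exp_comp f (.id A) g (.id C))).hom_eq

end Mor

section MonoidalClosed

variable {C : Type*} [Category* C] [MonoidalCategory C] [BraidedCategory C] [MonoidalClosed C]

lemma whiskerRight_coprod_hom_ext {X Y S Z W : C} {i₁ : X ⟶ S} {i₂ : Y ⟶ S}
    (hS : IsColimit (BinaryCofan.mk i₁ i₂)) {f g : S ⊗ Z ⟶ W}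
    (inl : i₁ ▷ Z ≫ f = i₁ ▷ Z ≫ g) (inr : i₂ ▷ Z ≫ f = i₂ ▷ Z ≫ g) : f = g := by
  rw [← cancel_epi (β_ Z S).hom]
  refine MonoidalClosed.curry_injective (BinaryCofan.IsColimit.hom_ext hS ?_ ?_)
  · change i₁ ≫ _ = i₁ ≫ _
    simp [← MonoidalClosed.curry_natural_left, inl]
  · change i₂ ≫ _ = i₂ ≫ _
    simp [← MonoidalClosed.curry_natural_left, inr]

end MonoidalClosed

section Distributivity

variable (A B C : Obj)

lemma hom_xiM : (xiM C A B).hom =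
    C ◁ (Obj.coprodMap ((ihom.coev C).app A ≫ (ihom C).map (Mor.inl (C ⊗ A) (C ⊗ B)).hom)
        ((ihom.coev C).app B ≫ (ihom C).map (Mor.inr (C ⊗ A) (C ⊗ B)).hom) ≫
      (Mor.codiag _).hom) ≫ (ihom.ev C).app _ := rfl

lemma whiskerLeft_inl_comp_xiM :
    C ◁ (Mor.inl A B).hom ≫ (xiM C A B).hom = (Mor.inl (C ⊗ A) (C ⊗ B)).hom := by
  rw [hom_xiM, ← whiskerLeft_comp_assoc, Obj.inl_comp_coprodMap_comp_codiag]
  exact (congrArg (C ◁ · ≫ _) (MonoidalClosed.curry_eq _).symm).trans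
    (MonoidalClosed.whiskerLeft_curry_ihom_ev_app ..)

lemma whiskerLeft_inr_comp_xiM :
    C ◁ (Mor.inr A B).hom ≫ (xiM C A B).hom = (Mor.inr (C ⊗ A) (C ⊗ B)).hom := by
  rw [hom_xiM, ← whiskerLeft_comp_assoc, Obj.inr_comp_coprodMap_comp_codiag]
  exact (congrArg (C ◁ · ≫ _) (MonoidalClosed.curry_eq _).symm).trans
    (MonoidalClosed.whiskerLeft_curry_ihom_ev_app ..)

end Distributivity

section OrElimination

variable {A B C D : Fml}

lemma hom_tP_orE (π₁ : JPf (A.and C) D) (π₂ : JPf (B.and C) D) :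
    (tP (.orE π₁ π₂)).hom =
      (β_ ((tF A).coprod (tF B)) (tF C)).hom ≫ (xiM (tF C) (tF A) (tF B)).hom ≫
        Obj.coprodMap (β_ (tF C) (tF A)).hom (β_ (tF C) (tF B)).hom ≫
          Obj.coprodMap (tP π₁).hom (tP π₂).hom ≫ (Mor.codiag (tF D)).hom := rfl

lemma inl_comp_hom_tP_orE (π₁ : JPf (A.and C) D) (π₂ : JPf (B.and C) D) :
    (Mor.inl (tF A) (tF B)).hom ▷ tF C ≫ (tP (.orE π₁ π₂)).hom = (tP π₁).hom := by
  rw [hom_tP_orE, BraidedCategory.braiding_naturality_left_assoc,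
    reassoc_of% whiskerLeft_inl_comp_xiM, reassoc_of% Obj.inl_comp_coprodMap,
    SymmetricCategory.symmetry_assoc]
  exact Obj.inl_comp_coprodMap_comp_codiag _ _

lemma inr_comp_hom_tP_orE (π₁ : JPf (A.and C) D) (π₂ : JPf (B.and C) D) :
    (Mor.inr (tF A) (tF B)).hom ▷ tF C ≫ (tP (.orE π₁ π₂)).hom = (tP π₂).hom := by
  rw [hom_tP_orE, BraidedCategory.braiding_naturality_left_assoc,
    reassoc_of% whiskerLeft_inr_comp_xiM, reassoc_of% Obj.inr_comp_coprodMap,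
    SymmetricCategory.symmetry_assoc]
  exact Obj.inr_comp_coprodMap_comp_codiag _ _

end OrElimination

/-! ### Predicates closed under the left rules -/

/-- A predicate on the morphisms from interpreted formulas to `X`, thought of as a family of
derivable sequents with succedent `X`. It is indexed by the formula and not by its interpretation,
so that the rules of `𝒥` act on it. -/
abbrev SeqPred (X : Obj) := ∀ Γ : Fml, (tF Γ ⟶ X) → Prop

/-- The morphisms of `ℬ` that are denoted by mixless proofs. -/
def Mixless (A : Fml) : SeqPred (tF A) := fun Γ q ↦ ∃ π : JPf Γ A, MixFree π ∧ (tP π).hom = q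

/-- The special morphisms by which the structural rules of `𝒥` act on antecedents. -/
inductive Structural : ∀ {A B : Fml}, Mor (tF A) (tF B) → Prop
  | assocR (A B C : Fml) : Structural (A := A.and (B.and C)) (B := (A.and B).and C)
      (.assocR (tF A) (tF B) (tF C))
  | assocL (A B C : Fml) : Structural (A := (A.and B).and C) (B := A.and (B.and C))
      (.assocL (tF A) (tF B) (tF C))
  | braid (A B : Fml) : Structural (A := A.and B) (B := B.and A) (.braid (tF A) (tF B))
  | diag (A : Fml) : Structural (A := A) (B := A.and A) (.diag (tF A))
  | bang (A : Fml) : Structural (A := A) (B := .top) (.bang (tF A))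
  | d (A : Fml) : Structural (A := A.and .top) (B := A) (.d (tF A))
  | dInv (A : Fml) : Structural (A := A) (B := A.and .top) (.dInv (tF A))

/-- Closure of a predicate under the rules of `𝒥` other than mix that act on the antecedent. The
rule `(◇)` is stated through its effect on the two coprojections, which determine the morphism it
produces because `_ × C` preserves coproducts. -/
structure IsLeftClosed {X : Obj} (P : SeqPred X) : Prop where
  structural {F : Ctx} (hF : F.boxes = 1) {A B : Fml} {s : Mor (tF A) (tF B)} (hs : Structural s)
    {q : tF (F.fill B) ⟶ X} : P (F.fill B) q → P (F.fill A) ((mapCtx F s).hom ≫ q)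
  exf (q : tF .bot ⟶ X) : P .bot q
  orE {A B C : Fml} {q : ((tF A).coprod (tF B)) ⊗ tF C ⟶ X} :
    P (A.and C) ((Mor.inl (tF A) (tF B)).hom ▷ tF C ≫ q) →
      P (B.and C) ((Mor.inr (tF A) (tF B)).hom ▷ tF C ≫ q) → P ((A.or B).and C) q
  tri {A B C D : Fml} {a : tF A ⟶ tF B} {q : tF C ⊗ tF D ⟶ X} : Mixless B A a → P (C.and D) q →
    P ((A.and (B.imp C)).and D)
      ((a ▷ (ihom (tF B)).obj (tF C) ≫ (ihom.ev (tF B)).app (tF C)) ▷ tF D ≫ q)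

/-- The least left-closed predicate containing `P`, encoded impredicatively. It plays the role of
the covering relation of a Beth model. -/
def LeftClosure {X : Obj} (P : SeqPred X) : SeqPred X := fun Γ q ↦
  ∀ Q : SeqPred X, IsLeftClosed Q → (∀ Γ q, P Γ q → Q Γ q) → Q Γ q

lemma Mixless.isLeftClosed (A : Fml) : IsLeftClosed (Mixless A) where
  structural := by
    rintro F hF _ _ _ hs _ ⟨π, hπ, rfl⟩
    cases hs with
    | assocR => exact ⟨.bA F hF π, hπ, rfl⟩
    | assocL => exact ⟨.bB F hF π, hπ, rfl⟩
    | braid => exact ⟨.perm F hF π, hπ, rfl⟩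
    | diag => exact ⟨.contr F hF π, hπ, rfl⟩
    | bang => exact ⟨.thin F hF _ π, hπ, rfl⟩
    | d => exact ⟨.unitI F hF π, hπ, rfl⟩
    | dInv => exact ⟨.unitE F hF π, hπ, rfl⟩
  exf q := ⟨.exf A, trivial, Obj.isInitialZero.hom_ext _ _⟩
  orE := by
    rintro B₁ B₂ C q ⟨π₁, h₁, eq₁⟩ ⟨π₂, h₂, eq₂⟩
    refine ⟨.orE π₁ π₂, ⟨h₁, h₂⟩, whiskerRight_coprod_hom_ext (Obj.isColimitCoprod _ _) ?_ ?_⟩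
    · exact (inl_comp_hom_tP_orE π₁ π₂).trans eq₁
    · exact (inr_comp_hom_tP_orE π₁ π₂).trans eq₂
  tri := by
    rintro B C D E _ _ ⟨π₁, h₁, rfl⟩ ⟨π₂, h₂, rfl⟩
    exact ⟨.tri π₁ π₂, ⟨h₁, h₂⟩, rfl⟩

lemma LeftClosure.isLeftClosed {X : Obj} (P : SeqPred X) : IsLeftClosed (LeftClosure P) where
  structural hF _ _ _ hs _ h Q hQ hPQ := hQ.structural hF hs (h Q hQ hPQ)
  exf q _ hQ _ := hQ.exf q
  orE h₁ h₂ Q hQ hPQ := hQ.orE (h₁ Q hQ hPQ) (h₂ Q hQ hPQ)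
  tri ha h Q hQ hPQ := hQ.tri ha (h Q hQ hPQ)

lemma LeftClosure.of {X : Obj} {P : SeqPred X} {Γ : Fml} {q : tF Γ ⟶ X} (h : P Γ q) :
    LeftClosure P Γ q := fun _ _ hPQ ↦ hPQ Γ q h

namespace IsLeftClosed

variable {X Y : Obj}

lemma forall_ {ι : Sort*} {P : ι → SeqPred X} (hP : ∀ i, IsLeftClosed (P i)) :
    IsLeftClosed fun Γ q ↦ ∀ i, P i Γ q where
  structural hF _ _ _ hs _ h i := (hP i).structural hF hs (h i)
  exf q i := (hP i).exf q
  orE h₁ h₂ i := (hP i).orE (h₁ i) (h₂ i)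
  tri ha h i := (hP i).tri ha (h i)

lemma and {P Q : SeqPred X} (hP : IsLeftClosed P) (hQ : IsLeftClosed Q) :
    IsLeftClosed fun Γ q ↦ P Γ q ∧ Q Γ q where
  structural hF _ _ _ hs _ h := ⟨hP.structural hF hs h.1, hQ.structural hF hs h.2⟩
  exf q := ⟨hP.exf q, hQ.exf q⟩
  orE h₁ h₂ := ⟨hP.orE h₁.1 h₂.1, hQ.orE h₁.2 h₂.2⟩
  tri ha h := ⟨hP.tri ha h.1, hQ.tri ha h.2⟩

lemma postcomp {P : SeqPred Y} (hP : IsLeftClosed P) (f : X ⟶ Y) :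
    IsLeftClosed fun Γ q ↦ P Γ (q ≫ f) where
  structural hF _ _ _ hs _ h :=
    (congrArg (P _) (Category.assoc _ _ f)).mpr (hP.structural hF hs h)
  exf q := hP.exf (q ≫ f)
  orE h₁ h₂ := hP.orE ((congrArg (P _) (Category.assoc _ _ f)).mp h₁)
    ((congrArg (P _) (Category.assoc _ _ f)).mp h₂)
  tri ha h := (congrArg (P _) (Category.assoc _ _ f)).mpr (hP.tri ha h)

variable {P : SeqPred X} (hP : IsLeftClosed P)
include hP

lemma structural_comp {A B : Fml} {s : Mor (tF A) (tF B)} (hs : Structural s) {q : tF B ⟶ X}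
    (h : P B q) : P A (s.hom ≫ q) :=
  hP.structural (F := .box) rfl hs h

lemma braiding_comp {A B : Fml} {q : tF B ⊗ tF A ⟶ X} (h : P (B.and A) q) :
    P (A.and B) ((β_ (tF A) (tF B)).hom ≫ q) := hP.structural_comp (.braid A B) h

lemma fst_comp {A : Fml} {q : tF A ⟶ X} (h : P A q) (B : Fml) :
    P (A.and B) (fst (tF A) (tF B) ≫ q) := by
  have eq : fst (tF A) (tF B) ≫ q =
      tF A ◁ (Mor.bang (tF B)).hom ≫ (Mor.d (tF A)).hom ≫ q := by
    rw [fst_def, Category.assoc]; rfl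
  exact eq ▸ hP.structural (F := .conR A .box) rfl (.bang B) (hP.structural_comp (.d A) h)

lemma snd_comp {B : Fml} {q : tF B ⟶ X} (h : P B q) (A : Fml) :
    P (A.and B) (snd (tF A) (tF B) ≫ q) := by
  have eq : snd (tF A) (tF B) ≫ q =
      (β_ (tF A) (tF B)).hom ≫ fst (tF B) (tF A) ≫ q := by
    rw [← braiding_hom_fst, Category.assoc]
  exact eq ▸ hP.braiding_comp (hP.fst_comp h A)

lemma diag_comp {A : Fml} {q : tF A ⊗ tF A ⟶ X} (h : P (A.and A) q) :
    P A (lift (𝟙 (tF A)) (𝟙 (tF A)) ≫ q) :=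
  Mor.hom_diag (tF A) ▸ hP.structural_comp (.diag A) h

lemma associator_hom_comp {A B C : Fml} {q : tF A ⊗ tF B ⊗ tF C ⟶ X} (h : P (A.and (B.and C)) q) :
    P ((A.and B).and C) ((α_ (tF A) (tF B) (tF C)).hom ≫ q) :=
  hP.structural_comp (.assocL A B C) h

lemma associator_inv_comp {A B C : Fml} {q : (tF A ⊗ tF B) ⊗ tF C ⟶ X} (h : P ((A.and B).and C) q) :
    P (A.and (B.and C)) ((α_ (tF A) (tF B) (tF C)).inv ≫ q) :=
  hP.structural_comp (.assocR A B C) h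

end IsLeftClosed

lemma IsLeftClosed.whiskerRight {X : Obj} {Δ : Fml} {P : SeqPred (X ⊗ tF Δ)}
    (hP : IsLeftClosed P) : IsLeftClosed fun Γ q ↦ P (Γ.and Δ) (q ▷ tF Δ) where
  structural {F} hF _ _ s hs q h := by
    have eq : ((mapCtx F s).hom ≫ q) ▷ tF Δ = (mapCtx F s).hom ▷ tF Δ ≫ q ▷ tF Δ :=
      comp_whiskerRight _ _ _
    exact eq ▸ hP.structural (F := .conL F Δ) hF hs h
  exf q := by
    have eq : fst Obj.zero (tF Δ) ≫ Obj.isInitialZero.to _ = q ▷ tF Δ :=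
      (Obj.isInitialZero.ofIso (mulZero Obj.isInitialZero).symm).hom_ext _ _
    exact eq ▸ hP.fst_comp (hP.exf _) Δ
  orE {A B C q} h₁ h₂ := by
    have eq {Y : Obj} (i : Y ⟶ (tF A).coprod (tF B)) :
        (α_ _ _ _).inv ≫ (i ▷ tF C ≫ q) ▷ tF Δ =
          i ▷ (tF C ⊗ tF Δ) ≫ (α_ _ _ _).inv ≫ q ▷ tF Δ := by
      simp
    refine Iso.hom_inv_id_assoc (α_ _ _ (tF Δ)) (q ▷ tF Δ) ▸
      hP.associator_hom_comp (B := C) (hP.orE ?_ ?_)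
    · exact eq _ ▸ hP.associator_inv_comp h₁
    · exact eq _ ▸ hP.associator_inv_comp h₂
  tri {A B C D a q} ha h := by
    have eq {Y : Obj} (f : Y ⟶ tF C) :
        (f ▷ tF D ≫ q) ▷ tF Δ =
          (α_ _ _ _).hom ≫ f ▷ (tF D ⊗ tF Δ) ≫ (α_ _ _ _).inv ≫ q ▷ tF Δ := by
      simp
    exact eq _ ▸ hP.associator_hom_comp (hP.tri ha (hP.associator_inv_comp h))

/-! ### Reducibility -/

namespace IsLeftClosed

variable {X : Obj} {P : SeqPred X} (hP : IsLeftClosed P)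
include hP

lemma rightUnitor_inv_comp {A : Fml} {q : tF A ⊗ 𝟙_ Obj ⟶ X} (h : P (A.and .top) q) :
    P A ((ρ_ (tF A)).inv ≫ q) :=
  hP.structural_comp (.dInv A) h

lemma of_inl_of_inr {A B : Fml} {q : (tF A).coprod (tF B) ⟶ X}
    (h₁ : P A ((Mor.inl (tF A) (tF B)).hom ≫ q)) (h₂ : P B ((Mor.inr (tF A) (tF B)).hom ≫ q)) :
    P (A.or B) q := by
  have eq {Y : Obj} (i : Y ⟶ (tF A).coprod (tF B)) :
      fst Y (𝟙_ Obj) ≫ i ≫ q = i ▷ 𝟙_ Obj ≫ (ρ_ _).hom ≫ q := by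
    simp [← rightUnitor_hom]
  refine Iso.inv_hom_id_assoc (ρ_ _) q ▸ hP.rightUnitor_inv_comp (hP.orE ?_ ?_)
  · exact eq _ ▸ hP.fst_comp h₁ .top
  · exact eq _ ▸ hP.fst_comp h₂ .top

lemma comp_ev {A B C : Fml} {a : tF A ⟶ tF B} {q : tF C ⟶ X} (ha : Mixless B A a) (h : P C q) :
    P (A.and (B.imp C))
      (a ▷ (ihom (tF B)).obj (tF C) ≫ (ihom.ev (tF B)).app (tF C) ≫ q) := by
  have eq : (ρ_ _).inv ≫ (a ▷ (ihom (tF B)).obj (tF C) ≫ (ihom.ev (tF B)).app (tF C)) ▷ 𝟙_ Obj ≫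
      fst _ _ ≫ q = a ▷ (ihom (tF B)).obj (tF C) ≫ (ihom.ev (tF B)).app (tF C) ≫ q := by
    simp [← rightUnitor_hom]
  exact eq ▸ hP.rightUnitor_inv_comp (hP.tri ha (hP.fst_comp h .top))

end IsLeftClosed

/-- The logical predicate of reducible morphisms to `X`. At `O` and at `+` it is closed off under
the left rules, as a Beth model is under covers; at `A ⇒ B` it asks that application to a reducible
argument, whose antecedent `Δ` is appended to the given one, be reducible. -/
def Red : ∀ X : Obj, SeqPred X
  | .pl i => Mixless (.pl i)
  | .unit => fun _ _ ↦ True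
  | .zero => LeftClosure fun _ _ ↦ False
  | .prod A B => fun Γ q ↦ Red A Γ (q ≫ fst A B) ∧ Red B Γ (q ≫ snd A B)
  | .coprod A B => LeftClosure fun Γ q ↦
      (∃ a, Red A Γ a ∧ a ≫ (Mor.inl A B).hom = q) ∨ ∃ b, Red B Γ b ∧ b ≫ (Mor.inr A B).hom = q
  | .exp A B => fun Γ (q : tF Γ ⟶ (ihom A).obj B) ↦ ∀ Δ a, Red A Δ a →
      Red B (Γ.and Δ) (q ▷ tF Δ ≫ (ihom A).obj B ◁ a ≫ (β_ _ A).hom ≫ (ihom.ev A).app B)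

lemma Red.isLeftClosed : ∀ X : Obj, IsLeftClosed (Red X)
  | .pl i => Mixless.isLeftClosed (.pl i)
  | .unit => ⟨fun _ _ _ _ _ _ _ ↦ trivial, fun _ ↦ trivial, fun _ _ ↦ trivial, fun _ _ ↦ trivial⟩
  | .zero => LeftClosure.isLeftClosed _
  | .prod A B => ((isLeftClosed A).postcomp _).and ((isLeftClosed B).postcomp _)
  | .coprod _ _ => LeftClosure.isLeftClosed _
  | .exp _ B => .forall_ fun _ ↦ .forall_ fun _ ↦ .forall_ fun _ ↦
      ((isLeftClosed B).postcomp _).whiskerRight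

namespace Mixless

variable {A B Γ : Fml}

lemma of_comp_fst_of_comp_snd {q : tF Γ ⟶ tF A ⊗ tF B} (h₁ : Mixless A Γ (q ≫ fst _ _))
    (h₂ : Mixless B Γ (q ≫ snd _ _)) : Mixless (A.and B) Γ q := by
  obtain ⟨π₁, hπ₁, eq₁⟩ := h₁
  obtain ⟨π₂, hπ₂, eq₂⟩ := h₂
  have eq : lift (𝟙 _) (𝟙 _) ≫ ((tP π₁).hom ⊗ₘ (tP π₂).hom) = q := by
    rw [lift_map, Category.id_comp, Category.id_comp, eq₁, eq₂, lift_comp_fst_snd]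
  exact eq ▸ (isLeftClosed _).diag_comp ⟨.andI π₁ π₂, ⟨hπ₁, hπ₂⟩, rfl⟩

lemma comp_inl {q : tF Γ ⟶ tF A} (hq : Mixless A Γ q) (B : Fml) :
    Mixless (A.or B) Γ (q ≫ (Mor.inl (tF A) (tF B)).hom) := by
  obtain ⟨π, hπ, rfl⟩ := hq
  exact ⟨.orI1 B π, hπ, rfl⟩

lemma comp_inr {q : tF Γ ⟶ tF B} (hq : Mixless B Γ q) (A : Fml) :
    Mixless (A.or B) Γ (q ≫ (Mor.inr (tF A) (tF B)).hom) := by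
  obtain ⟨π, hπ, rfl⟩ := hq
  exact ⟨.orI2 A π, hπ, rfl⟩

protected lemma curry {q : tF A ⊗ tF Γ ⟶ tF B} (hq : Mixless B (A.and Γ) q) :
    Mixless (A.imp B) Γ (MonoidalClosed.curry q) := by
  obtain ⟨π, hπ, rfl⟩ := hq
  exact ⟨.star π, hπ,
    (congrArg (_ ≫ ·) (Mor.hom_id_ex (tF A) (tP π))).trans (MonoidalClosed.curry_eq _).symm⟩

end Mixless

lemma Red.refl_imp {A B : Fml}
    (hA : ∀ {Δ : Fml} {a : tF Δ ⟶ tF A}, Red (tF A) Δ a → Mixless A Δ a)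
    (hB : Red (tF B) B (𝟙 (tF B))) : Red (tF (A.imp B)) (A.imp B) (𝟙 (tF (A.imp B))) := by
  intro Δ a ha
  have eq : (β_ _ _).hom ≫ a ▷ (ihom (tF A)).obj (tF B) ≫ (ihom.ev (tF A)).app (tF B) ≫ 𝟙 (tF B) =
      𝟙 _ ▷ tF Δ ≫ _ ◁ a ≫ (β_ _ (tF A)).hom ≫ (ihom.ev (tF A)).app (tF B) := by
    simp
  exact eq ▸ (isLeftClosed _).braiding_comp ((isLeftClosed (tF B)).comp_ev (hA ha) hB)

mutual

lemma Mixless.of_red : ∀ {A Γ : Fml} {q : tF Γ ⟶ tF A}, Red (tF A) Γ q → Mixless A Γ q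
  | .pl _, _, _, h => h
  | .top, Γ, q, _ => ⟨.thin .box rfl Γ (.ax .top), trivial, toUnit_unique _ _⟩
  | .bot, _, _, h => h _ (Mixless.isLeftClosed .bot) fun _ _ ↦ False.elim
  | .and _ _, _, _, ⟨h₁, h₂⟩ => .of_comp_fst_of_comp_snd (.of_red h₁) (.of_red h₂)
  | .or _ _, _, _, h => h _ (Mixless.isLeftClosed _) fun _ _ ↦ by
      rintro (⟨a, ha, rfl⟩ | ⟨b, hb, rfl⟩)
      · exact (Mixless.of_red ha).comp_inl _
      · exact (Mixless.of_red hb).comp_inr _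
  | .imp A B, Γ, (q : _ ⟶ (ihom (tF A)).obj (tF B)), h => by
    have eq : (β_ (tF A) _).hom ≫ q ▷ tF A ≫ _ ◁ 𝟙 (tF A) ≫ (β_ _ (tF A)).hom ≫
        (ihom.ev (tF A)).app (tF B) = MonoidalClosed.uncurry q := by
      simp [MonoidalClosed.uncurry_eq]
    have hq : Mixless B (A.and Γ) (MonoidalClosed.uncurry q) :=
      eq ▸ (Mixless.isLeftClosed B).braiding_comp (.of_red (h A _ (.refl A)))
    exact MonoidalClosed.curry_uncurry q ▸ hq.curry

lemma Red.refl : ∀ A : Fml, Red (tF A) A (𝟙 (tF A))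
  | .pl i => ⟨.ax (.pl i), trivial, rfl⟩
  | .top => trivial
  | .bot => (LeftClosure.isLeftClosed _).exf _
  | .and A B => by
    have eq {C : Obj} (f : tF A ⊗ tF B ⟶ C) : f ≫ 𝟙 C = 𝟙 (tF A ⊗ tF B) ≫ f := by simp
    exact ⟨eq _ ▸ (Red.isLeftClosed _).fst_comp (.refl A) B,
      eq _ ▸ (Red.isLeftClosed _).snd_comp (.refl B) A⟩
  | .or A B => (LeftClosure.isLeftClosed _).of_inl_of_inr
      (LeftClosure.of (.inl ⟨_, .refl A, (Category.id_comp _).trans (Category.comp_id _).symm⟩))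
      (LeftClosure.of (.inr ⟨_, .refl B, (Category.id_comp _).trans (Category.comp_id _).symm⟩))
  | .imp _ B => .refl_imp .of_red (.refl B)

end

/-- The morphisms of `ℬ` that preserve reducibility, the interpretation of the morphism terms in the
logical predicate `Red`. -/
def Reducing : MorphismProperty Obj :=
  fun X Y f ↦ ∀ ⦃Γ : Fml⦄ ⦃q : tF Γ ⟶ X⦄, Red X Γ q → Red Y Γ (q ≫ f)

namespace Reducing

variable {A B C D : Obj}

protected lemma id (A : Obj) : Reducing (𝟙 A) := fun _ q h ↦ (Category.comp_id q).symm ▸ h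

protected lemma comp {f : A ⟶ B} {g : B ⟶ C} (hf : Reducing f) (hg : Reducing g) :
    Reducing (f ≫ g) :=
  fun _ q h ↦ Category.assoc q f g ▸ hg (hf h)

protected lemma toUnit (A : Obj) : Reducing (toUnit A) := fun _ _ _ ↦ trivial

protected lemma fst (A B : Obj) : Reducing (fst A B) := fun _ _ h ↦ h.1

protected lemma snd (A B : Obj) : Reducing (snd A B) := fun _ _ h ↦ h.2

protected lemma lift {f : A ⟶ B} {g : A ⟶ C} (hf : Reducing f) (hg : Reducing g) :
    Reducing (lift f g) :=
  fun _ q h ↦ ⟨by simpa using hf h, by simpa using hg h⟩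

protected lemma tensorHom {f : A ⟶ B} {g : C ⟶ D} (hf : Reducing f) (hg : Reducing g) :
    Reducing (f ⊗ₘ g) := by
  have eq : f ⊗ₘ g = lift (fst A C ≫ f) (snd A C ≫ g) := by ext <;> simp
  exact eq ▸ ((Reducing.fst A C).comp hf).lift ((Reducing.snd A C).comp hg)

protected lemma whiskerRight {f : A ⟶ B} (hf : Reducing f) (C : Obj) : Reducing (f ▷ C) :=
  tensorHom_id f C ▸ hf.tensorHom (.id C)

lemma rightUnitor_hom (A : Obj) : Reducing (ρ_ A).hom :=
  CartesianMonoidalCategory.rightUnitor_hom A ▸ .fst A (𝟙_ Obj)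

lemma rightUnitor_inv (A : Obj) : Reducing (ρ_ A).inv := by
  have eq : (ρ_ A).inv = lift (𝟙 A) (toUnit A) := by ext; simp
  exact eq ▸ (Reducing.id A).lift (.toUnit A)

lemma associator_hom (A B C : Obj) : Reducing (α_ A B C).hom := by
  have eq : (α_ A B C).hom = lift (fst _ _ ≫ fst _ _) (lift (fst _ _ ≫ snd _ _) (snd _ _)) := by
    ext <;> simp
  have left := Reducing.fst (A ⊗ B) C
  exact eq ▸ (left.comp (.fst A B)).lift ((left.comp (.snd A B)).lift (.snd (A ⊗ B) C))

lemma associator_inv (A B C : Obj) : Reducing (α_ A B C).inv := by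
  have eq : (α_ A B C).inv = lift (lift (fst _ _) (snd _ _ ≫ fst _ _)) (snd _ _ ≫ snd _ _) := by
    ext <;> simp
  have right := Reducing.snd A (B ⊗ C)
  exact eq ▸ ((Reducing.fst A (B ⊗ C)).lift (right.comp (.fst B C))).lift (right.comp (.snd B C))

lemma braiding_hom (A B : Obj) : Reducing (β_ A B).hom := by
  have eq : (β_ A B).hom = lift (snd A B) (fst A B) := by ext <;> simp
  exact eq ▸ (Reducing.snd A B).lift (.fst A B)

lemma of_zero (f : Obj.zero ⟶ A) : Reducing f :=
  fun _ _ hq ↦ hq _ ((Red.isLeftClosed A).postcomp f) fun _ _ ↦ False.elim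

lemma inl (A B : Obj) : Reducing (Mor.inl A B).hom :=
  fun _ a ha ↦ LeftClosure.of (.inl ⟨a, ha, rfl⟩)

lemma inr (A B : Obj) : Reducing (Mor.inr A B).hom :=
  fun _ b hb ↦ LeftClosure.of (.inr ⟨b, hb, rfl⟩)

lemma of_inl_of_inr {f : A.coprod B ⟶ C} (hl : Reducing ((Mor.inl A B).hom ≫ f))
    (hr : Reducing ((Mor.inr A B).hom ≫ f)) : Reducing f := by
  refine fun _ _ hq ↦ hq _ ((Red.isLeftClosed C).postcomp f) fun _ _ ↦ ?_
  rintro (⟨a, ha, rfl⟩ | ⟨b, hb, rfl⟩)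
  · exact Category.assoc a _ f ▸ hl ha
  · exact Category.assoc b _ f ▸ hr hb

lemma ev_app (A B : Obj) : Reducing ((ihom.ev A).app B) := by
  intro Γ q hq
  have eq {q : tF Γ ⟶ A ⊗ (ihom A).obj B} :
      lift (𝟙 _) (𝟙 _) ≫ (q ≫ snd _ _) ▷ tF Γ ≫ _ ◁ (q ≫ fst _ _) ≫
        (β_ _ A).hom ≫ (ihom.ev A).app B = q ≫ (ihom.ev A).app B := by
    simp only [lift_whiskerRight_assoc, lift_whiskerLeft_assoc, lift_braiding_hom_assoc,
      Category.id_comp, lift_comp_fst_snd]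
  exact eq ▸ (Red.isLeftClosed B).diag_comp (hq.2 Γ _ hq.1)

protected lemma curry {f : A ⊗ B ⟶ C} (hf : Reducing f) : Reducing (MonoidalClosed.curry f) := by
  intro Γ b hb Δ a ha
  have eq : lift (snd _ _ ≫ a) (fst _ _ ≫ b) ≫ f = (b ≫ MonoidalClosed.curry f) ▷ tF Δ ≫
      (ihom A).obj C ◁ a ≫ (β_ _ A).hom ≫ (ihom.ev A).app C := by
    have beta : (β_ (tF Γ) (tF Δ)).hom ≫ (a ⊗ₘ b) = lift (snd _ _ ≫ a) (fst _ _ ≫ b) := by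
      ext <;> simp
    simp [← beta, MonoidalCategory.tensorHom_def, whisker_exchange_assoc,
      MonoidalClosed.whiskerLeft_curry_ihom_ev_app]
  refine eq ▸ hf ⟨?_, ?_⟩
  · exact (lift_fst (snd _ _ ≫ a) (fst _ _ ≫ b)).symm ▸ (Red.isLeftClosed A).snd_comp ha Γ
  · exact (lift_snd (snd _ _ ≫ a) (fst _ _ ≫ b)).symm ▸ (Red.isLeftClosed B).fst_comp hb Δ

end Reducing

lemma Mor.reducing_hom {X Y : Obj} (g : Mor X Y) : Reducing g.hom := by
  induction g with
  | id A => exact .id A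
  | comp f g hf hg => exact hf.comp hg
  | d A => exact .rightUnitor_hom A
  | dInv A => exact .rightUnitor_inv A
  | assocR A B C => exact .associator_inv A B C
  | assocL A B C => exact .associator_hom A B C
  | braid A B => exact .braiding_hom A B
  | diag A => exact hom_diag A ▸ (Reducing.id A).lift (.id A)
  | bang A => exact .toUnit A
  | codiag A =>
    exact .of_inl_of_inr (Obj.inl_comp_codiag A ▸ .id A) (Obj.inr_comp_codiag A ▸ .id A)
  | exf A => exact .of_zero _
  | inl A B => exact .inl A B
  | inr A B => exact .inr A B
  | ev A B => exact .ev_app A B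
  | coev A B => exact (MonoidalClosed.curry_id_eq_coev A B).subst (Reducing.id (A ⊗ B)).curry
  | pr f g hf hg => exact hf.tensorHom hg
  | co f g hf hg =>
    exact .of_inl_of_inr (Obj.inl_comp_coprodMap f.hom g.hom ▸ hf.comp (.inl _ _))
      (Obj.inr_comp_coprodMap f.hom g.hom ▸ hg.comp (.inr _ _))
  | ex f g hf hg => exact hom_ex f g ▸ (((hf.whiskerRight _).comp (.ev_app _ _)).comp hg).curry

lemma exists_mixless_of_tF_eq {A B : Fml} {X Y : Obj} (hX : tF A = X) (hY : tF B = Y)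
    (g : Mor X Y) :
    ∃ π : JPf A B, MixFree π ∧ BEq g (cast (by rw [hX, hY]) (tP π) : Mor X Y) := by
  subst hX hY
  obtain ⟨π, hπ, eq⟩ := Mixless.of_red (g.reducing_hom (Red.refl A))
  exact ⟨π, hπ, Mor.hom_eq_iff.mp (eq.trans (Category.id_comp g.hom)).symm⟩

/-- Lemma 5.16 of the paper.  For every morphism term `g` of the
free bicartesian closed category `ℬ` there exists a mixless proof `π` of the sequent
system `𝒥` such that `g = t(π)` holds in `ℬ`. -/
theorem exists_mixless_repr (X Y : Obj) (g : Mor X Y) :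
    ∃ π : JPf (uF X) (uF Y), MixFree π ∧
      BEq g (cast (by rw [tF_uF, tF_uF]) (tP π) : Mor X Y) :=
  exists_mixless_of_tF_eq (tF_uF X) (tF_uF Y) g

end JSys
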